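/- arXiv:math/0607502 — 7 statements merged into one kernel-verified Lean document; each statement's English description precedes it below -/
import Mathlib

section
/- For all points z = (z₁,z₂) and ζ = (ζ₁,ζ₂) in ℂ², one has ‖z−ζ‖·‖z+ζ‖ ≤ 2‖π₂(z)−π₂(ζ)‖. -/
open Complex

noncomputable section

/-- The point `(a, b, c)` of `ℂ³` with the Euclidean (Hermitian) norm. -/
def mk3 (a b c : ℂ) : EuclideanSpace ℂ (Fin 3) :=
  (WithLp.equiv 2 (Fin 3 → ℂ)).symm ![a, b, c]

/-- `π₂(z₁, z₂) = (z₁², z₂², z₁z₂)`. -/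
def pi2 (z : EuclideanSpace ℂ (Fin 2)) : EuclideanSpace ℂ (Fin 3) :=
  mk3 (z 0 ^ 2) (z 1 ^ 2) (z 0 * z 1)

/-!
With `w = x - y` and `s = x + y`, polarization gives
`2 (xᵢ xⱼ - yᵢ yⱼ) = wᵢ sⱼ + wⱼ sᵢ`, the coordinates of the symmetric tensor `w ⊗ s + s ⊗ w`.
The square of its norm is `2 (‖w‖² ‖s‖² + |⟪w, s⟫|²) ≥ 2 ‖w‖² ‖s‖²`. It counts each pair `i ≠ j`
twice, whereas the quadratic Veronese map has one coordinate for it, so it is at most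
`2 · (2 ‖V x - V y‖)²`, where `V` is that map.
-/

section Sym2Sum

variable {ι : Type*} [Fintype ι]

theorem card_filter_sym2_mk_eq_le_two [DecidableEq ι] (p : Sym2 ι) :
    (Finset.univ.filter fun q : ι × ι ↦ s(q.1, q.2) = p).card ≤ 2 := by
  induction p with | _ a b
  have fiber_subset : (Finset.univ.filter fun q : ι × ι ↦ s(q.1, q.2) = s(a, b)) ⊆
      {(a, b), (b, a)} := fun q hq ↦ by simpa [Prod.ext_iff] using hq
  exact (Finset.card_le_card fiber_subset).trans Finset.card_le_two

theorem sum_sum_sym2_mk_le_two_nsmul_sum {M : Type*} [AddCommMonoid M] [PartialOrder M]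
    [IsOrderedAddMonoid M] {f : Sym2 ι → M} (hf : ∀ p, 0 ≤ f p) :
    ∑ i, ∑ j, f s(i, j) ≤ 2 • ∑ p, f p := by
  classical
  calc ∑ i, ∑ j, f s(i, j)
      = ∑ q : ι × ι, f s(q.1, q.2) := (Fintype.sum_prod_type' fun i j ↦ f s(i, j)).symm
    _ = ∑ p, ∑ q : ι × ι with s(q.1, q.2) = p, f s(q.1, q.2) :=
        (Finset.sum_fiberwise _ _ _).symm
    _ = ∑ p, (Finset.univ.filter fun q : ι × ι ↦ s(q.1, q.2) = p).card • f p :=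
        Finset.sum_congr rfl fun _ _ ↦
          Finset.sum_eq_card_nsmul fun _ hq ↦ congrArg f (Finset.mem_filter.1 hq).2
    _ ≤ ∑ p, 2 • f p := Finset.sum_le_sum fun p _ ↦
        nsmul_le_nsmul_left (hf p) (card_filter_sym2_mk_eq_le_two p)
    _ = 2 • ∑ p, f p := (Finset.smul_sum).symm

end Sym2Sum

section SymmetricTensor

variable {𝕜 ι : Type*} [RCLike 𝕜] [Fintype ι]

theorem sum_sum_norm_mul_sq (x y : EuclideanSpace 𝕜 ι) :
    ∑ i, ∑ j, ‖x i * y j‖ ^ 2 = ‖x‖ ^ 2 * ‖y‖ ^ 2 := by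
  simp only [EuclideanSpace.norm_sq_eq, norm_mul, mul_pow, Finset.sum_mul_sum]

theorem sum_sum_inner_mul_mul_swap (x y : EuclideanSpace 𝕜 ι) :
    ∑ i, ∑ j, inner 𝕜 (x i * y j) (x j * y i) = (‖inner 𝕜 x y‖ : 𝕜) ^ 2 := by
  calc ∑ i, ∑ j, inner 𝕜 (x i * y j) (x j * y i)
      = inner 𝕜 x y * inner 𝕜 y x := by
        simp only [PiLp.inner_apply, RCLike.inner_apply, Finset.sum_mul_sum, map_mul]
        exact Finset.sum_congr rfl fun i _ ↦ Finset.sum_congr rfl fun j _ ↦ by ring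
    _ = (‖inner 𝕜 x y‖ : 𝕜) ^ 2 := by rw [← inner_conj_symm y x, RCLike.mul_conj]

theorem sum_sum_norm_mul_add_mul_sq (x y : EuclideanSpace 𝕜 ι) :
    ∑ i, ∑ j, ‖x i * y j + x j * y i‖ ^ 2 = 2 * (‖x‖ ^ 2 * ‖y‖ ^ 2 + ‖inner 𝕜 x y‖ ^ 2) := by
  have sum_swap : ∑ i, ∑ j, ‖x j * y i‖ ^ 2 = ‖x‖ ^ 2 * ‖y‖ ^ 2 := by
    rw [Finset.sum_comm, sum_sum_norm_mul_sq]
  have sum_cross :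
      ∑ i, ∑ j, RCLike.re (inner 𝕜 (x i * y j) (x j * y i)) = ‖inner 𝕜 x y‖ ^ 2 := by
    simp only [← map_sum, sum_sum_inner_mul_mul_swap]
    rw [← RCLike.ofReal_pow, RCLike.ofReal_re]
  simp only [norm_add_sq (𝕜 := 𝕜), Finset.sum_add_distrib, ← Finset.mul_sum,
    sum_sum_norm_mul_sq, sum_swap, sum_cross]
  ring

end SymmetricTensor

section QuadraticVeronese

variable {𝕜 ι : Type*} [RCLike 𝕜]

/-- The quadratic Veronese map `x ↦ (xᵢ xⱼ)`, which generalizes `π₂` to any number of variables.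
Its coordinates are indexed by unordered pairs, so that each monomial of degree `2` occurs once,
and with coefficient `1`. -/
def quadraticVeronese (x : EuclideanSpace 𝕜 ι) : EuclideanSpace 𝕜 (Sym2 ι) :=
  WithLp.toLp 2 fun p ↦ (p.map x).mul

theorem quadraticVeronese_mk (x : EuclideanSpace 𝕜 ι) (i j : ι) :
    quadraticVeronese x s(i, j) = x i * x j :=
  rfl

theorem two_mul_quadraticVeronese_sub_mk (x y : EuclideanSpace 𝕜 ι) (i j : ι) :
    2 * (quadraticVeronese x - quadraticVeronese y) s(i, j) =
      (x - y) i * (x + y) j + (x - y) j * (x + y) i := by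
  simp only [PiLp.sub_apply, PiLp.add_apply, quadraticVeronese_mk]
  ring

variable [Fintype ι]

theorem norm_sub_sq_mul_norm_add_sq_add_norm_inner_sq_le (x y : EuclideanSpace 𝕜 ι) :
    ‖x - y‖ ^ 2 * ‖x + y‖ ^ 2 + ‖inner 𝕜 (x - y) (x + y)‖ ^ 2 ≤
      (2 * ‖quadraticVeronese x - quadraticVeronese y‖) ^ 2 := by
  set d := quadraticVeronese x - quadraticVeronese y with hd
  have polarized : 2 * (‖x - y‖ ^ 2 * ‖x + y‖ ^ 2 + ‖inner 𝕜 (x - y) (x + y)‖ ^ 2) =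
      ∑ i, ∑ j, ‖2 * d s(i, j)‖ ^ 2 := by
    simp only [hd, two_mul_quadraticVeronese_sub_mk, sum_sum_norm_mul_add_mul_sq]
  have norm_two_mul : ∑ p, ‖2 * d p‖ ^ 2 = (2 * ‖d‖) ^ 2 := by
    simp only [norm_mul, RCLike.norm_ofNat, mul_pow, EuclideanSpace.norm_sq_eq, Finset.mul_sum]
  have double_count := sum_sum_sym2_mk_le_two_nsmul_sum fun p ↦ sq_nonneg ‖2 * d p‖
  rw [← polarized, norm_two_mul, nsmul_eq_mul, Nat.cast_ofNat] at double_count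
  exact le_of_mul_le_mul_left double_count two_pos

theorem stmt0_general (x y : EuclideanSpace 𝕜 ι) :
    ‖x - y‖ * ‖x + y‖ ≤ 2 * ‖quadraticVeronese x - quadraticVeronese y‖ := by
  refine le_of_sq_le_sq ?_ (by positivity)
  rw [mul_pow]
  exact (le_add_of_nonneg_right (sq_nonneg _)).trans
    (norm_sub_sq_mul_norm_add_sq_add_norm_inner_sq_le x y)

end QuadraticVeronese

theorem norm_pi2_sub_pi2 (z ζ : EuclideanSpace ℂ (Fin 2)) :
    ‖pi2 z - pi2 ζ‖ = ‖quadraticVeronese z - quadraticVeronese ζ‖ := by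
  have univ_sym2 : (Finset.univ : Finset (Sym2 (Fin 2))) = {s(0, 0), s(1, 1), s(0, 1)} := by
    decide
  rw [EuclideanSpace.norm_eq, EuclideanSpace.norm_eq, Fin.sum_univ_three, univ_sym2,
    Finset.sum_insert (by decide), Finset.sum_insert (by decide), Finset.sum_singleton]
  simp only [pi2, mk3, PiLp.sub_apply, quadraticVeronese_mk, WithLp.equiv_symm_apply,
    Matrix.cons_val, sq, add_assoc]

/-- For all `z, ζ ∈ ℂ²`, `‖z−ζ‖·‖z+ζ‖ ≤ 2‖π₂(z)−π₂(ζ)‖`. -/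
theorem stmt0 (z ζ : EuclideanSpace ℂ (Fin 2)) :
    ‖z - ζ‖ * ‖z + ζ‖ ≤ 2 * ‖pi2 z - pi2 ζ‖ := by
  rw [norm_pi2_sub_pi2]
  exact stmt0_general z ζ
end
end

section
/- Let N ≥ 2 be a natural number and let z, ζ ∈ ℂ² be such that ‖z−φ_k(ζ)‖_∞ ≥ ‖z−ζ‖_∞ for every k = 1, …, N. Then ‖π_N(z)−π_N(ζ)‖ ≥ min{ ‖z−ζ‖_∞²/12 , ‖z−ζ‖_∞^N/2^N }. -/
/-!
Factor `x ^ N - y ^ N = ∏ (x - μ y)` over the `N`-th roots of unity. In each coordinate the smallest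
factor has `N`-th power at most the difference of the `N`-th powers, so a smallest factor that is at
least `s` already gives the bound `s ^ N`. Otherwise there are roots of unity `μ`, `ν` with
`|z₁ - μ ζ₁| < s` and `|z₂ - ν⁻¹ ζ₂| < s`. If `s ≤ d` and all the points `(ξ ζ₁, ξ⁻¹ ζ₂)` with
`ξ ^ N = 1` are at sup distance at least `d` from `z`, then `|z₂ - μ⁻¹ ζ₂| ≥ d` and
`|z₁ - ν ζ₁| ≥ d`. The identity
`(μ - ν) (z₁ z₂ - ζ₁ ζ₂) = μ (z₁ - ν ζ₁) (z₂ - μ⁻¹ ζ₂) - ν (z₁ - μ ζ₁) (z₂ - ν⁻¹ ζ₂)`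
then gives `2 |z₁ z₂ - ζ₁ ζ₂| ≥ d ^ 2 - s ^ 2`.
-/

open Complex

noncomputable section

/-- The point `(a, b)` of `ℂ²` with the Euclidean (Hermitian) norm. -/
def mk2 (a b : ℂ) : EuclideanSpace ℂ (Fin 2) :=
  (WithLp.equiv 2 (Fin 2 → ℂ)).symm ![a, b]

/-- `π_N(z₁, z₂) = (z₁^N, z₂^N, z₁z₂)`. -/
def piN (N : ℕ) (z : EuclideanSpace ℂ (Fin 2)) : EuclideanSpace ℂ (Fin 3) :=
  mk3 (z 0 ^ N) (z 1 ^ N) (z 0 * z 1)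

/-- `ρ_N = e^{2πi/N}`. -/
def rhoN (N : ℕ) : ℂ := Complex.exp (2 * Real.pi * Complex.I / N)

/-- `φ_k(z₁, z₂) = (ρ_N^k z₁, ρ_N^{−k} z₂)`. -/
def phiN (N k : ℕ) (z : EuclideanSpace ℂ (Fin 2)) : EuclideanSpace ℂ (Fin 2) :=
  mk2 (rhoN N ^ k * z 0) (rhoN N ^ (-(k : ℤ)) * z 1)

/-- `‖z − ζ‖_∞ = max(|z₁−ζ₁|, |z₂−ζ₂|)`. -/
def supDist (z ζ : EuclideanSpace ℂ (Fin 2)) : ℝ :=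
  max ‖z 0 - ζ 0‖ ‖z 1 - ζ 1‖

section NormedField

variable {K : Type*} [NormedField K] {N : ℕ}

/-- The map `(x, y) ↦ (μ x, μ⁻¹ y)` of `K²`, so that `φ_k` is the twist by `ρ_N ^ k`.
Points live in `K × K` because its norm is the sup norm. -/
def antidiagonalTwist (μ : K) (z : K × K) : K × K :=
  (μ * z.1, μ⁻¹ * z.2)

/-- The map `(x, y) ↦ (x ^ N, y ^ N, x y)`, which generalizes `π_N` to a field `K`; its target
carries the sup norm, which is at most the Euclidean norm used for `π_N`. -/
def powPowMul (N : ℕ) (z : K × K) : K × K × K :=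
  (z.1 ^ N, z.2 ^ N, z.1 * z.2)

theorem exists_norm_sub_mul_pow_le [NeZero N] {ρ : K} (hρ : IsPrimitiveRoot ρ N) (x y : K) :
    ∃ μ : K, μ ^ N = 1 ∧ ‖x - μ * y‖ ^ N ≤ ‖x ^ N - y ^ N‖ := by
  have hN : 0 < N := NeZero.pos N
  have one_mem : (1 : K) ∈ Polynomial.nthRootsFinset N (1 : K) :=
    Polynomial.one_mem_nthRootsFinset hN
  obtain ⟨μ, hμ, hmin⟩ :=
    (Polynomial.nthRootsFinset N (1 : K)).exists_min_image (fun ν ↦ ‖x - ν * y‖) ⟨1, one_mem⟩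
  refine ⟨μ, (Polynomial.mem_nthRootsFinset hN 1).1 hμ, ?_⟩
  calc ‖x - μ * y‖ ^ N
      = ∏ _ν ∈ Polynomial.nthRootsFinset N (1 : K), ‖x - μ * y‖ := by
        rw [Finset.prod_const, hρ.card_nthRootsFinset]
    _ ≤ ∏ ν ∈ Polynomial.nthRootsFinset N (1 : K), ‖x - ν * y‖ :=
        Finset.prod_le_prod (fun _ _ ↦ norm_nonneg _) hmin
    _ = ‖x ^ N - y ^ N‖ := by
        rw [hρ.pow_sub_pow_eq_prod_sub_mul x y hN, norm_prod]

theorem sub_mul_mul_sub_mul_eq {F : Type*} [Field F] {μ ν : F} (hμ : μ ≠ 0) (hν : ν ≠ 0)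
    (x₁ x₂ y₁ y₂ : F) :
    (μ - ν) * (x₁ * x₂ - y₁ * y₂) =
      μ * ((x₁ - ν * y₁) * (x₂ - μ⁻¹ * y₂)) - ν * ((x₁ - μ * y₁) * (x₂ - ν⁻¹ * y₂)) := by
  field_simp
  ring

theorem norm_mul_norm_sub_norm_mul_norm_le {μ ν : K} (hμ : ‖μ‖ = 1) (hν : ‖ν‖ = 1)
    (x₁ x₂ y₁ y₂ : K) :
    ‖x₁ - ν * y₁‖ * ‖x₂ - μ⁻¹ * y₂‖ - ‖x₁ - μ * y₁‖ * ‖x₂ - ν⁻¹ * y₂‖ ≤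
      2 * ‖x₁ * x₂ - y₁ * y₂‖ := by
  have hμ0 : μ ≠ 0 := norm_ne_zero_iff.1 (by simp [hμ])
  have hν0 : ν ≠ 0 := norm_ne_zero_iff.1 (by simp [hν])
  have norm_sub_le_two : ‖μ - ν‖ ≤ 2 :=
    (norm_sub_le μ ν).trans (by rw [hμ, hν, one_add_one_eq_two])
  calc ‖x₁ - ν * y₁‖ * ‖x₂ - μ⁻¹ * y₂‖ - ‖x₁ - μ * y₁‖ * ‖x₂ - ν⁻¹ * y₂‖
      = ‖μ * ((x₁ - ν * y₁) * (x₂ - μ⁻¹ * y₂))‖ -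
          ‖ν * ((x₁ - μ * y₁) * (x₂ - ν⁻¹ * y₂))‖ := by
        simp only [norm_mul, hμ, hν, one_mul]
    _ ≤ ‖μ - ν‖ * ‖x₁ * x₂ - y₁ * y₂‖ := by
        rw [← norm_mul, sub_mul_mul_sub_mul_eq hμ0 hν0]
        exact norm_sub_norm_le _ _
    _ ≤ 2 * ‖x₁ * x₂ - y₁ * y₂‖ := by gcongr

theorem sq_sub_sq_div_two_le_norm_mul_sub_mul {z ζ : K × K} {μ ν : K} {d s : ℝ}
    (hμ : ‖μ‖ = 1) (hν : ‖ν‖ = 1) (hsd : s ≤ d)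
    (hdμ : d ≤ ‖z - antidiagonalTwist μ ζ‖) (hdν : d ≤ ‖z - antidiagonalTwist ν ζ‖)
    (hsμ : ‖z.1 - μ * ζ.1‖ < s) (hsν : ‖z.2 - ν⁻¹ * ζ.2‖ < s) :
    (d ^ 2 - s ^ 2) / 2 ≤ ‖z.1 * z.2 - ζ.1 * ζ.2‖ := by
  have hs : 0 ≤ s := (norm_nonneg _).trans hsμ.le
  have hd : 0 ≤ d := hs.trans hsd
  have far_snd : d ≤ ‖z.2 - μ⁻¹ * ζ.2‖ :=
    (le_max_iff.1 hdμ).resolve_left (hsμ.trans_le hsd).not_ge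
  have far_fst : d ≤ ‖z.1 - ν * ζ.1‖ :=
    (le_max_iff.1 hdν).resolve_right (hsν.trans_le hsd).not_ge
  rw [div_le_iff₀' two_pos]
  calc d ^ 2 - s ^ 2 = d * d - s * s := by ring
    _ ≤ ‖z.1 - ν * ζ.1‖ * ‖z.2 - μ⁻¹ * ζ.2‖ - ‖z.1 - μ * ζ.1‖ * ‖z.2 - ν⁻¹ * ζ.2‖ := by gcongr
    _ ≤ 2 * ‖z.1 * z.2 - ζ.1 * ζ.2‖ :=
        norm_mul_norm_sub_norm_mul_norm_le hμ hν _ _ _ _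

theorem stmt2_general [NeZero N] {ρ : K} (hρ : IsPrimitiveRoot ρ N) {z ζ : K × K} {d s : ℝ}
    (hs : 0 ≤ s) (hsd : s ≤ d)
    (hd : ∀ μ : K, μ ^ N = 1 → d ≤ ‖z - antidiagonalTwist μ ζ‖) :
    min ((d ^ 2 - s ^ 2) / 2) (s ^ N) ≤ ‖powPowMul N z - powPowMul N ζ‖ := by
  obtain ⟨μ, hμ, hμ_le⟩ := exists_norm_sub_mul_pow_le hρ z.1 ζ.1
  obtain ⟨ν, hν, hν_le⟩ : ∃ ν : K, ν ^ N = 1 ∧ ‖z.2 - ν⁻¹ * ζ.2‖ ^ N ≤ ‖z.2 ^ N - ζ.2 ^ N‖ := by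
    obtain ⟨ν, hν, hν_le⟩ := exists_norm_sub_mul_pow_le hρ z.2 ζ.2
    exact ⟨ν⁻¹, by rw [inv_pow, hν, inv_one], by rwa [inv_inv]⟩
  rcases le_or_gt s ‖z.1 - μ * ζ.1‖ with hsμ | hsμ
  · calc min ((d ^ 2 - s ^ 2) / 2) (s ^ N) ≤ s ^ N := min_le_right _ _
      _ ≤ ‖z.1 - μ * ζ.1‖ ^ N := by gcongr
      _ ≤ ‖z.1 ^ N - ζ.1 ^ N‖ := hμ_le
      _ ≤ ‖powPowMul N z - powPowMul N ζ‖ := norm_fst_le (powPowMul N z - powPowMul N ζ)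
  rcases le_or_gt s ‖z.2 - ν⁻¹ * ζ.2‖ with hsν | hsν
  · calc min ((d ^ 2 - s ^ 2) / 2) (s ^ N) ≤ s ^ N := min_le_right _ _
      _ ≤ ‖z.2 - ν⁻¹ * ζ.2‖ ^ N := by gcongr
      _ ≤ ‖z.2 ^ N - ζ.2 ^ N‖ := hν_le
      _ ≤ ‖(powPowMul N z - powPowMul N ζ).2‖ := norm_fst_le (powPowMul N z - powPowMul N ζ).2
      _ ≤ ‖powPowMul N z - powPowMul N ζ‖ := norm_snd_le (powPowMul N z - powPowMul N ζ)
  have norm_root {ξ : K} (hξ : ξ ^ N = 1) : ‖ξ‖ = 1 :=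
    (isOfFinOrder_iff_pow_eq_one.2 ⟨N, NeZero.pos N, hξ⟩).norm_eq_one
  calc min ((d ^ 2 - s ^ 2) / 2) (s ^ N) ≤ (d ^ 2 - s ^ 2) / 2 := min_le_left _ _
    _ ≤ ‖z.1 * z.2 - ζ.1 * ζ.2‖ :=
        sq_sub_sq_div_two_le_norm_mul_sub_mul (norm_root hμ) (norm_root hν) hsd (hd μ hμ)
          (hd ν hν) hsμ hsν
    _ ≤ ‖(powPowMul N z - powPowMul N ζ).2‖ := norm_snd_le (powPowMul N z - powPowMul N ζ).2
    _ ≤ ‖powPowMul N z - powPowMul N ζ‖ := norm_snd_le (powPowMul N z - powPowMul N ζ)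

end NormedField

theorem isPrimitiveRoot_rhoN (N : ℕ) [NeZero N] : IsPrimitiveRoot (rhoN N) N :=
  Complex.isPrimitiveRoot_exp N (NeZero.ne N)

theorem supDist_phiN (N k : ℕ) (z ζ : EuclideanSpace ℂ (Fin 2)) :
    supDist z (phiN N k ζ) = ‖(z 0, z 1) - antidiagonalTwist (rhoN N ^ k) (ζ 0, ζ 1)‖ := by
  simp [supDist, phiN, mk2, antidiagonalTwist, Prod.norm_def]

theorem norm_powPowMul_sub_le_norm_piN_sub (N : ℕ) (z ζ : EuclideanSpace ℂ (Fin 2)) :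
    ‖powPowMul N (z 0, z 1) - powPowMul N (ζ 0, ζ 1)‖ ≤ ‖piN N z - piN N ζ‖ := by
  have coord_le := PiLp.norm_apply_le (piN N z - piN N ζ)
  exact norm_prod_le_iff.2 ⟨coord_le 0, norm_prod_le_iff.2 ⟨coord_le 1, coord_le 2⟩⟩

theorem le_norm_sub_antidiagonalTwist_of_le_supDist_phiN {N : ℕ} [NeZero N] {d : ℝ}
    {z ζ : EuclideanSpace ℂ (Fin 2)} (h : ∀ k : ℕ, 1 ≤ k → k ≤ N → d ≤ supDist z (phiN N k ζ))
    {μ : ℂ} (hμ : μ ^ N = 1) : d ≤ ‖(z 0, z 1) - antidiagonalTwist μ (ζ 0, ζ 1)‖ := by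
  obtain ⟨k, hkN, rfl⟩ := (isPrimitiveRoot_rhoN N).eq_pow_of_pow_eq_one hμ
  rcases k.eq_zero_or_pos with rfl | hk
  · rw [pow_zero, ← (isPrimitiveRoot_rhoN N).pow_eq_one, ← supDist_phiN]
    exact h N (NeZero.pos N) le_rfl
  · rw [← supDist_phiN]
    exact h k hk hkN.le

theorem min_le_norm_piN_sub {N : ℕ} [NeZero N] {d s : ℝ} {z ζ : EuclideanSpace ℂ (Fin 2)}
    (hs : 0 ≤ s) (hsd : s ≤ d) (h : ∀ k : ℕ, 1 ≤ k → k ≤ N → d ≤ supDist z (phiN N k ζ)) :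
    min ((d ^ 2 - s ^ 2) / 2) (s ^ N) ≤ ‖piN N z - piN N ζ‖ :=
  (stmt2_general (isPrimitiveRoot_rhoN N) hs hsd
    fun _ ↦ le_norm_sub_antidiagonalTwist_of_le_supDist_phiN h).trans
    (norm_powPowMul_sub_le_norm_piN_sub N z ζ)

/-- If `‖z−φ_k(ζ)‖_∞ ≥ ‖z−ζ‖_∞` for every `k = 1, …, N`, then
`‖π_N(z)−π_N(ζ)‖ ≥ min{‖z−ζ‖_∞²/12, ‖z−ζ‖_∞^N/2^N}`. -/
theorem stmt2 (N : ℕ) (hN : 2 ≤ N) (z ζ : EuclideanSpace ℂ (Fin 2))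
    (h : ∀ k : ℕ, 1 ≤ k → k ≤ N → supDist z (phiN N k ζ) ≥ supDist z ζ) :
    ‖piN N z - piN N ζ‖ ≥ min (supDist z ζ ^ 2 / 12) (supDist z ζ ^ N / 2 ^ N) := by
  have : NeZero N := ⟨by lia⟩
  have supDist_nonneg : 0 ≤ supDist z ζ := le_max_of_le_left (norm_nonneg _)
  exact (min_le_min (by linarith [sq_nonneg (supDist z ζ)]) (div_pow _ _ _).ge).trans
    (min_le_norm_piN_sub (by positivity) (half_le_self supDist_nonneg) h)
end
end

section
/- Let a, b, s, t be complex numbers and ω a complex number with |ω| = 1. Assume |a−s| ≥ |b−t|, |b| ≤ |s| + |a−s|/12, |a − ωs| ≤ |a−s|/2, and |ωb − t| ≥ |a−s|. Then |ab − st| ≥ |a−s|²/12. -/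
/-!
Write `d = ‖a - s‖` and `a * b - s * t = s * (ω * b - t) + (a - s * ω) * b`. The first term has norm
at least `‖s‖ * d`, and the second at most `d / 2 * (‖s‖ + d / 12)`. Since `s * ω` is within `d / 2`
of `a` and within `2 * ‖s‖` of `s`, also `d ≤ 4 * ‖s‖`. Hence
`‖a * b - s * t‖ ≥ ‖s‖ * d / 2 - d ^ 2 / 24 ≥ d ^ 2 / 8 - d ^ 2 / 24 = d ^ 2 / 12`.
-/

section NonUnitalSeminormedRing

variable {R : Type*} [NonUnitalSeminormedRing R]

theorem norm_mul_mul_sub_le (a b s t ω : R) :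
    ‖s * (ω * b - t)‖ ≤ ‖a * b - s * t‖ + ‖a - s * ω‖ * ‖b‖ :=
  calc ‖s * (ω * b - t)‖ = ‖(a * b - s * t) - (a - s * ω) * b‖ := by
        congr 1; noncomm_ring
    _ ≤ ‖a * b - s * t‖ + ‖(a - s * ω) * b‖ := norm_sub_le _ _
    _ ≤ ‖a * b - s * t‖ + ‖a - s * ω‖ * ‖b‖ := by gcongr; exact norm_mul_le _ _

theorem norm_mul_sub_self_le {ω : R} (hω : ‖ω‖ ≤ 1) (s : R) : ‖s * ω - s‖ ≤ 2 * ‖s‖ :=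
  calc ‖s * ω - s‖ ≤ ‖s * ω‖ + ‖s‖ := norm_sub_le _ _
    _ ≤ ‖s‖ * 1 + ‖s‖ := by gcongr; exact norm_mul_le_of_le le_rfl hω
    _ = 2 * ‖s‖ := by ring

theorem norm_sub_le_four_mul_norm {a s ω : R} (hω : ‖ω‖ ≤ 1)
    (ha : ‖a - s * ω‖ ≤ ‖a - s‖ / 2) : ‖a - s‖ ≤ 4 * ‖s‖ := by
  have triangle : ‖a - s‖ ≤ ‖a - s * ω‖ + ‖s * ω - s‖ := norm_sub_le_norm_sub_add_norm_sub _ _ _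
  linarith [norm_mul_sub_self_le hω s]

theorem stmt5_general [NormMulClass R] (a b s t ω : R) (hω : ‖ω‖ ≤ 1)
    (hb : ‖b‖ ≤ ‖s‖ + ‖a - s‖ / 12)
    (ha : ‖a - s * ω‖ ≤ ‖a - s‖ / 2)
    (ht : ‖a - s‖ ≤ ‖ω * b - t‖) :
    ‖a - s‖ ^ 2 / 12 ≤ ‖a * b - s * t‖ := by
  have main_term : ‖s‖ * ‖a - s‖ ≤ ‖s * (ω * b - t)‖ := by
    rw [norm_mul]
    gcongr
  have error_term : ‖a - s * ω‖ * ‖b‖ ≤ ‖a - s‖ / 2 * (‖s‖ + ‖a - s‖ / 12) := by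
    gcongr
  have sq_le : ‖a - s‖ * ‖a - s‖ ≤ ‖a - s‖ * (4 * ‖s‖) := by
    gcongr
    exact norm_sub_le_four_mul_norm hω ha
  calc ‖a - s‖ ^ 2 / 12 ≤ ‖s‖ * ‖a - s‖ - ‖a - s‖ / 2 * (‖s‖ + ‖a - s‖ / 12) := by
        linarith
    _ ≤ ‖s * (ω * b - t)‖ - ‖a - s * ω‖ * ‖b‖ := sub_le_sub main_term error_term
    _ ≤ ‖a * b - s * t‖ := sub_le_iff_le_add.mpr (norm_mul_mul_sub_le a b s t ω)

end NonUnitalSeminormedRing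

/-- If `|ω| = 1`, `|a−s| ≥ |b−t|`, `|b| ≤ |s| + |a−s|/12`, `|a − ωs| ≤ |a−s|/2` and
`|ωb − t| ≥ |a−s|`, then `|ab − st| ≥ |a−s|²/12`. -/
theorem stmt5 (a b s t ω : ℂ) (hω : ‖ω‖ = 1)
    (h1 : ‖a - s‖ ≥ ‖b - t‖)
    (h2 : ‖b‖ ≤ ‖s‖ + ‖a - s‖ / 12)
    (h3 : ‖a - ω * s‖ ≤ ‖a - s‖ / 2)
    (h4 : ‖ω * b - t‖ ≥ ‖a - s‖) :
    ‖a * b - s * t‖ ≥ ‖a - s‖ ^ 2 / 12 :=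
  stmt5_general a b s t ω hω.le h2 (mul_comm ω s ▸ h3) h4
end

section
/- Let N ≥ 2 be a natural number and a, s complex numbers. Then there exists a subset J of {1, 2, …, N} with at least N − Ev(N)/2 elements such that |a − ρ_N^j·s|² ≥ |a|² + |s|² for every j ∈ J; in particular, |a − ρ_N^j·s| ≥ max{|a|, |s|, |a−s|/√2} for every j ∈ J. -/
noncomputable section

/-- `Ev(N)`: the smallest even integer greater than or equal to `N`. -/
def Ev (N : ℕ) : ℕ := if N % 2 = 0 then N else N + 1

/-! By the law of cosines, `‖a - ρ_N^j s‖² ≥ ‖a‖² + ‖s‖²` as soon as `⟨a, ρ_N^j s⟩ ≤ 0`. The points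
`ρ_N^j s` advance by angles `2π/N`, so the closed half-plane opposite to `a`, which spans an angle
`π`, contains at least `⌊N/2⌋ = N - Ev(N)/2` consecutive ones, and by periodicity of `j ↦ ρ_N^j` the
exponents may be taken in `{1, …, N}`. -/

open Finset

lemma sub_Ev_div_two (N : ℕ) : N - Ev N / 2 = N / 2 := by
  unfold Ev
  split_ifs <;> omega

lemma le_card_filter_Ico_of_periodic {p : ℕ → Prop} [DecidablePred p] {N k m : ℕ}
    (hp : Function.Periodic p N) (hk : k ≤ N) (hm : ∀ j ∈ Ico m (m + k), p j) (n : ℕ) :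
    k ≤ #{j ∈ Ico n (n + N) | p j} := by
  have hsub : Ico m (m + k) ⊆ {j ∈ Ico m (m + N) | p j} := fun j hj =>
    mem_filter.2 ⟨Ico_subset_Ico_right (by omega) hj, hm j hj⟩
  calc k = #(Ico m (m + k)) := by simp
    _ ≤ #{j ∈ Ico m (m + N) | p j} := card_le_card hsub
    _ = #{j ∈ Ico n (n + N) | p j} := by
      rw [Nat.filter_Ico_card_eq_of_periodic m N p hp, Nat.filter_Ico_card_eq_of_periodic n N p hp]

lemma exists_forall_mem_Ico_cos_add_mul_nonpos {δ : ℝ} (hδ : 0 < δ) {k : ℕ}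
    (hk : k * δ ≤ Real.pi) (θ : ℝ) :
    ∃ m : ℕ, ∀ j ∈ Ico m (m + k), Real.cos (θ + j * δ) ≤ 0 := by
  obtain ⟨n, hn⟩ : ∃ n : ℕ, θ - Real.pi / 2 ≤ n * (2 * Real.pi) := by
    simpa only [nsmul_eq_mul] using Archimedean.arch (θ - Real.pi / 2) Real.two_pi_pos
  set x : ℝ := (Real.pi / 2 + n * (2 * Real.pi) - θ) / δ
  have hx : x * δ = Real.pi / 2 + n * (2 * Real.pi) - θ := div_mul_cancel₀ _ hδ.ne'
  have hx₀ : 0 ≤ x := div_nonneg (by linarith) hδ.le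
  refine ⟨⌈x⌉₊, fun j hj => ?_⟩
  obtain ⟨hmj, hjm⟩ := mem_Ico.1 hj
  have hxj : x ≤ j := Nat.ceil_le.1 hmj
  have hjx : (j : ℝ) ≤ x + k := by
    have hj_succ : (j : ℝ) + 1 ≤ ⌈x⌉₊ + k := by exact_mod_cast hjm
    linarith [Nat.ceil_lt_add_one hx₀]
  have hlower : x * δ ≤ j * δ := by gcongr
  have hupper : j * δ ≤ x * δ + k * δ := by rw [← add_mul]; gcongr
  rw [← Real.cos_sub_nat_mul_two_pi _ n]
  exact Real.cos_nonpos_of_pi_div_two_le_of_le (by linarith) (by linarith)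

lemma rhoN_pow_eq_exp (N j : ℕ) :
    rhoN N ^ j = Complex.exp ((j * (2 * Real.pi / N) : ℝ) * Complex.I) := by
  rw [rhoN, ← Complex.exp_nat_mul]
  push_cast
  ring_nf

lemma norm_rhoN_pow (N j : ℕ) : ‖rhoN N ^ j‖ = 1 := by
  rw [rhoN_pow_eq_exp, Complex.norm_exp_ofReal_mul_I]

lemma rhoN_pow_self {N : ℕ} (hN : N ≠ 0) : rhoN N ^ N = 1 :=
  (Complex.isPrimitiveRoot_exp N hN).pow_eq_one

lemma re_exp_ofReal_mul_I_mul (c : ℂ) (t : ℝ) :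
    (Complex.exp (t * Complex.I) * c).re = ‖c‖ * Real.cos (c.arg + t) := by
  rw [Complex.mul_re, Complex.exp_ofReal_mul_I_re, Complex.exp_ofReal_mul_I_im, Real.cos_add,
    ← Complex.norm_mul_cos_arg c, ← Complex.norm_mul_sin_arg c]
  ring

lemma div_two_le_card_re_rhoN_pow_mul_nonpos {N : ℕ} (hN : N ≠ 0) (c : ℂ) :
    N / 2 ≤ #{j ∈ Icc 1 N | (rhoN N ^ j * c).re ≤ 0} := by
  have hN₀ : (0 : ℝ) < N := by exact_mod_cast Nat.pos_of_ne_zero hN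
  have hwindow : (N / 2 : ℕ) * (2 * Real.pi / N) ≤ Real.pi :=
    calc (N / 2 : ℕ) * (2 * Real.pi / N) ≤ N / 2 * (2 * Real.pi / N) := by
          gcongr
          exact Nat.cast_div_le
      _ = Real.pi := by field_simp
  obtain ⟨m, hm⟩ :=
    exists_forall_mem_Ico_cos_add_mul_nonpos (div_pos Real.two_pi_pos hN₀) hwindow c.arg
  have hre : ∀ j ∈ Ico m (m + N / 2), (rhoN N ^ j * c).re ≤ 0 := fun j hj => by
    rw [rhoN_pow_eq_exp, re_exp_ofReal_mul_I_mul]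
    exact mul_nonpos_of_nonneg_of_nonpos (norm_nonneg c) (hm j hj)
  have hperiodic : Function.Periodic (fun j => (rhoN N ^ j * c).re ≤ 0) N := fun j => by
    simp only [pow_add, rhoN_pow_self hN, mul_one]
  rw [← Ico_add_one_right_eq_Icc, add_comm N 1]
  exact le_card_filter_Ico_of_periodic hperiodic (Nat.div_le_self N 2) hre 1

lemma norm_sq_add_norm_sq_le_of_inner_nonpos {E : Type*} [SeminormedAddCommGroup E]
    [InnerProductSpace ℝ E] {x y : E} (h : inner ℝ x y ≤ 0) :
    ‖x‖ ^ 2 + ‖y‖ ^ 2 ≤ ‖x - y‖ ^ 2 := by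
  rw [norm_sub_sq_real]
  linarith

lemma max_norm_norm_sub_div_sqrt_two_le {E : Type*} [SeminormedAddGroup E] {x y : E} {r : ℝ}
    (hr : 0 ≤ r) (h : ‖x‖ ^ 2 + ‖y‖ ^ 2 ≤ r ^ 2) :
    max (max ‖x‖ ‖y‖) (‖x - y‖ / √2) ≤ r := by
  have hx : ‖x‖ ≤ r := le_of_sq_le_sq (by linarith [sq_nonneg ‖y‖]) hr
  have hy : ‖y‖ ≤ r := le_of_sq_le_sq (by linarith [sq_nonneg ‖x‖]) hr
  have hsub_sq : ‖x - y‖ ^ 2 ≤ (r * √2) ^ 2 :=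
    calc ‖x - y‖ ^ 2 ≤ (‖x‖ + ‖y‖) ^ 2 := by gcongr; exact norm_sub_le x y
      _ ≤ 2 * (‖x‖ ^ 2 + ‖y‖ ^ 2) := add_sq_le
      _ ≤ 2 * r ^ 2 := by gcongr
      _ = (r * √2) ^ 2 := by rw [mul_pow, Real.sq_sqrt zero_le_two, mul_comm]
  have hsub_le : ‖x - y‖ ≤ r * √2 := le_of_sq_le_sq hsub_sq (by positivity)
  exact max_le (max_le hx hy) ((div_le_iff₀ (by positivity)).2 hsub_le)

/-- There is a subset `J ⊆ {1, …, N}` with at least `N − Ev(N)/2` elements such that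
`|a − ρ_N^j·s|² ≥ |a|² + |s|²` for every `j ∈ J`; in particular
`|a − ρ_N^j·s| ≥ max{|a|, |s|, |a−s|/√2}` for every `j ∈ J`. -/
theorem stmt7 (N : ℕ) (hN : 2 ≤ N) (a s : ℂ) :
    ∃ J : Finset ℕ, J ⊆ Finset.Icc 1 N ∧ N - Ev N / 2 ≤ J.card ∧
      (∀ j ∈ J, ‖a‖ ^ 2 + ‖s‖ ^ 2 ≤
        ‖a - rhoN N ^ j * s‖ ^ 2) ∧
      (∀ j ∈ J, max (max ‖a‖ ‖s‖)
        (‖a - s‖ / Real.sqrt 2) ≤ ‖a - rhoN N ^ j * s‖) := by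
  let J : Finset ℕ := {j ∈ Icc 1 N | (rhoN N ^ j * (s * starRingEnd ℂ a)).re ≤ 0}
  have hcard : N - Ev N / 2 ≤ #J :=
    (sub_Ev_div_two N).trans_le (div_two_le_card_re_rhoN_pow_mul_nonpos (by omega) _)
  have hJ : ∀ j ∈ J, ‖a‖ ^ 2 + ‖s‖ ^ 2 ≤ ‖a - rhoN N ^ j * s‖ ^ 2 := fun j hj => by
    have hinner : inner ℝ a (rhoN N ^ j * s) ≤ 0 := by
      rw [Complex.inner, mul_assoc]
      exact (mem_filter.1 hj).2
    simpa only [norm_mul, norm_rhoN_pow, one_mul] using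
      norm_sq_add_norm_sq_le_of_inner_nonpos hinner
  exact ⟨J, filter_subset _ _, hcard, hJ,
    fun j hj => max_norm_norm_sub_div_sqrt_two_le (norm_nonneg _) (hJ j hj)⟩
end
end

section
/- Let N ≥ 2 be a natural number and let x, w ∈ ℂ³ both satisfy the equation of X_{2N} (i.e. x₁x₂ = x₃^{2N} and w₁w₂ = w₃^{2N}). Then η₂(x) = η₂(w) if and only if w = x or w = Px. -/
open Complex

noncomputable section

/-- `η₂(x₁, x₂, x₃) = ((x₁+x₂)/2, x₃(x₁−x₂)/(2i), x₃²)`. -/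
def eta2 (x : EuclideanSpace ℂ (Fin 3)) : EuclideanSpace ℂ (Fin 3) :=
  mk3 ((x 0 + x 1) / 2) (x 2 * (x 0 - x 1) / (2 * Complex.I)) (x 2 ^ 2)

/-- `P(x₁, x₂, x₃) = (x₂, x₁, −x₃)`. -/
def Pmap (x : EuclideanSpace ℂ (Fin 3)) : EuclideanSpace ℂ (Fin 3) :=
  mk3 (x 1) (x 0) (-(x 2))

/-!
Since `η₂` is `P`-invariant and remembers `x₃²`, replacing `x` by `Px` if necessary we may assume
that `x` and `w` have the same third coordinate `z`. If `z ≠ 0`, then `η₂` determines both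
`x₁ + x₂` and `x₁ - x₂`, hence `x`. If `z = 0`, the difference is lost, but the equation of the
surface expresses the product `x₁x₂` as a function of `x₃`, so `x₁` and `x₂` are determined up to
order, and exchanging them is exactly what `P` does on the plane `x₃ = 0`.
-/

section Ring

variable {R : Type*} {a b c d : R}

theorem eq_and_eq_of_add_eq_add_of_sub_eq_sub [Ring R] [NoZeroDivisors R] [NeZero (2 : R)]
    (hadd : a + b = c + d) (hsub : a - b = c - d) : a = c ∧ b = d := by
  have hac : a = c := by
    refine mul_left_cancel₀ (two_ne_zero (α := R)) ?_
    calc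
      2 * a = (a + b) + (a - b) := by rw [two_mul]; abel
      _ = (c + d) + (c - d) := by rw [hadd, hsub]
      _ = 2 * c := by rw [two_mul]; abel
  subst hac
  exact ⟨rfl, add_left_cancel hadd⟩

theorem eq_and_eq_or_eq_and_eq_of_add_eq_add_of_mul_eq_mul [CommRing R] [NoZeroDivisors R]
    (hadd : a + b = c + d) (hmul : a * b = c * d) : c = a ∧ d = b ∨ c = b ∧ d = a := by
  have hroot : (c - a) * (c - b) = 0 := by linear_combination hmul - c * hadd
  rcases mul_eq_zero.1 hroot with hca | hcb
  · obtain rfl := sub_eq_zero.1 hca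
    exact .inl ⟨rfl, (add_left_cancel hadd).symm⟩
  · obtain rfl := sub_eq_zero.1 hcb
    exact .inr ⟨rfl, add_left_cancel (hadd.symm.trans (add_comm a c))⟩

end Ring

theorem euclideanSpace_fin_three_ext_iff {𝕜 : Type*} {x w : EuclideanSpace 𝕜 (Fin 3)} :
    x = w ↔ x 0 = w 0 ∧ x 1 = w 1 ∧ x 2 = w 2 := by
  rw [PiLp.ext_iff, Fin.forall_fin_succ, Fin.forall_fin_two]
  rfl

section Eta

variable {x w : EuclideanSpace ℂ (Fin 3)}

theorem eq_Pmap_iff : w = Pmap x ↔ w 0 = x 1 ∧ w 1 = x 0 ∧ w 2 = -x 2 :=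
  euclideanSpace_fin_three_ext_iff

theorem eta2_eq_eta2_iff :
    eta2 x = eta2 w ↔
      x 0 + x 1 = w 0 + w 1 ∧ x 2 * (x 0 - x 1) = w 2 * (w 0 - w 1) ∧ x 2 ^ 2 = w 2 ^ 2 := by
  have two_I_ne_zero : 2 * I ≠ 0 := mul_ne_zero two_ne_zero I_ne_zero
  exact euclideanSpace_fin_three_ext_iff.trans <|
    and_congr (div_left_inj' two_ne_zero) (and_congr (div_left_inj' two_I_ne_zero) .rfl)

theorem eta2_Pmap (x : EuclideanSpace ℂ (Fin 3)) : eta2 (Pmap x) = eta2 x := by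
  have hdiff : -x 2 * (x 1 - x 0) = x 2 * (x 0 - x 1) := by ring
  exact eta2_eq_eta2_iff.2 ⟨add_comm _ _, hdiff, neg_sq _⟩

theorem eq_of_eta2_eq_of_apply_two_eq (heta : eta2 x = eta2 w) (htwo : x 2 = w 2)
    (hne : w 2 ≠ 0) : x = w := by
  obtain ⟨hsum, hdiff, -⟩ := eta2_eq_eta2_iff.1 heta
  rw [htwo] at hdiff
  obtain ⟨hzero, hone⟩ :=
    eq_and_eq_of_add_eq_add_of_sub_eq_sub hsum (mul_left_cancel₀ hne hdiff)
  exact euclideanSpace_fin_three_ext_iff.2 ⟨hzero, hone, htwo⟩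

theorem eq_or_eq_Pmap_of_apply_two_eq_zero (hsum : x 0 + x 1 = w 0 + w 1)
    (hprod : x 0 * x 1 = w 0 * w 1) (hx : x 2 = 0) (hw : w 2 = 0) : w = x ∨ w = Pmap x := by
  rw [euclideanSpace_fin_three_ext_iff, eq_Pmap_iff, hx, hw, neg_zero]
  simpa only [and_true] using eq_and_eq_or_eq_and_eq_of_add_eq_add_of_mul_eq_mul hsum hprod

end Eta

theorem stmt13_general (g : ℂ → ℂ) (x w : EuclideanSpace ℂ (Fin 3))
    (hx : x 0 * x 1 = g (x 2)) (hw : w 0 * w 1 = g (w 2)) :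
    eta2 x = eta2 w ↔ (w = x ∨ w = Pmap x) := by
  constructor
  · intro heta
    obtain ⟨hsum, -, hsq⟩ := eta2_eq_eta2_iff.1 heta
    by_cases hw₂ : w 2 = 0
    · have hx₂ : x 2 = 0 := by
        simpa only [hw₂, zero_pow two_ne_zero, sq_eq_zero_iff] using hsq
      have hprod : x 0 * x 1 = w 0 * w 1 := by rw [hx, hw, hx₂, hw₂]
      exact eq_or_eq_Pmap_of_apply_two_eq_zero hsum hprod hx₂ hw₂
    · rcases sq_eq_sq_iff_eq_or_eq_neg.1 hsq with hsame | hopp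
      · exact .inl (eq_of_eta2_eq_of_apply_two_eq heta hsame hw₂).symm
      · have hP₂ : Pmap x 2 = w 2 := neg_eq_iff_eq_neg.2 hopp
        exact .inr (eq_of_eta2_eq_of_apply_two_eq ((eta2_Pmap x).trans heta) hP₂ hw₂).symm
  · rintro (rfl | rfl)
    · rfl
    · exact (eta2_Pmap x).symm

/-- For `x, w` on `X_{2N}`, `η₂(x) = η₂(w)` iff `w = x` or `w = Px`. -/
theorem stmt13 (N : ℕ) (hN : 2 ≤ N) (x w : EuclideanSpace ℂ (Fin 3))
    (hx : x 0 * x 1 = x 2 ^ (2 * N)) (hw : w 0 * w 1 = w 2 ^ (2 * N)) :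
    eta2 x = eta2 w ↔ (w = x ∨ w = Pmap x) :=
  stmt13_general (fun z ↦ z ^ (2 * N)) x w hx hw
end
end

section
/- Let N ≥ 2 be a natural number and ρ > 0. Let x and w be two points of X_{2N} with ‖x‖ ≤ ρ and ‖w‖ ≤ ρ, and suppose that ‖Q(w − Px)‖ ≥ ‖Q(w − x)‖. Then ‖η₂(x) − η₂(w)‖ ≥ C₁₂(ρ)·‖x − w‖², where C₁₂(ρ) = (1/80)·min{ 4 , 5/(3ρ) , 1/(ρ^{2N−2}·N) }. -/
open Complex

noncomputable section

/-- `Q(x₁, x₂, x₃) = ((x₁+x₂)/2, (−ix₁+ix₂)/2, x₃)`. -/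
def Qmap (x : EuclideanSpace ℂ (Fin 3)) : EuclideanSpace ℂ (Fin 3) :=
  mk3 ((x 0 + x 1) / 2) ((-Complex.I * x 0 + Complex.I * x 1) / 2) (x 2)

/-
In the coordinates `(u, v, z) = Q x` the surface reads `u² + v² = z ^ (2N)`, the map `η₂` becomes
`(u, v z, z²)`, and `P` becomes `(u, -v, -z)`. So `η₂` controls the differences of `u`, `v z` and
`z²`, and on the surface also that of `v²`. With `a`, `b` the differences and `s`, `t` the sums of
the `v`- and `z`-coordinates of the two points, these are bounds on `a s`, `b t` and `a t + b s`.
The hypothesis on `Q (w - P x)` says that `|a|² + |b|² ≤ |s|² + |t|²`, and then Lagrange's identity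
`(A² + B²) (S² + T²) = (A S + B T)² + (A T - B S)²` for the absolute values bounds `a` and `b`.
-/

lemma norm_sq_add_norm_sq_le {R : Type*} [NormedRing R] [NormMulClass R] {a b s t : R}
    (h : ‖a‖ ^ 2 + ‖b‖ ^ 2 ≤ ‖s‖ ^ 2 + ‖t‖ ^ 2) :
    ‖a‖ ^ 2 + ‖b‖ ^ 2 ≤ ‖a * s‖ + ‖b * t‖ + ‖a * t + b * s‖ := by
  have reverse_triangle : (‖a * t‖ - ‖b * s‖) ^ 2 ≤ ‖a * t + b * s‖ ^ 2 := by
    rw [sq_le_sq, abs_norm]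
    simpa using abs_norm_sub_norm_le (a * t) (-(b * s))
  refine le_of_sq_le_sq ?_ (by positivity)
  calc (‖a‖ ^ 2 + ‖b‖ ^ 2) ^ 2
    _ ≤ (‖a‖ ^ 2 + ‖b‖ ^ 2) * (‖s‖ ^ 2 + ‖t‖ ^ 2) := by rw [sq]; gcongr
    _ = (‖a * s‖ + ‖b * t‖) ^ 2 + (‖a * t‖ - ‖b * s‖) ^ 2 := by simp only [norm_mul]; ring
    _ ≤ (‖a * s‖ + ‖b * t‖) ^ 2 + ‖a * t + b * s‖ ^ 2 := by gcongr
    _ ≤ (‖a * s‖ + ‖b * t‖ + ‖a * t + b * s‖) ^ 2 := by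
      rw [add_sq (_ + _) ‖a * t + b * s‖]
      gcongr
      exact le_add_of_nonneg_right (by positivity)

lemma norm_pow_sub_pow_le {R : Type*} [NormedCommRing R] [NormOneClass R] {p q : R} {r : ℝ}
    (hp : ‖p‖ ≤ r) (hq : ‖q‖ ≤ r) (n : ℕ) :
    ‖p ^ n - q ^ n‖ ≤ r ^ (n - 1) * n * ‖p - q‖ := by
  have hr : 0 ≤ r := (norm_nonneg p).trans hp
  have term_le : ∀ i ∈ Finset.range n, ‖p ^ i * q ^ (n - 1 - i)‖ ≤ r ^ (n - 1) := fun i hi ↦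
    calc ‖p ^ i * q ^ (n - 1 - i)‖
      _ ≤ ‖p‖ ^ i * ‖q‖ ^ (n - 1 - i) :=
        norm_mul_le_of_le (norm_pow_le p i) (norm_pow_le q _)
      _ ≤ r ^ i * r ^ (n - 1 - i) := by gcongr
      _ = r ^ (n - 1) := by
        rw [← pow_add, Nat.add_sub_cancel' (Nat.le_sub_one_of_lt (Finset.mem_range.1 hi))]
  calc ‖p ^ n - q ^ n‖
    _ = ‖(∑ i ∈ Finset.range n, p ^ i * q ^ (n - 1 - i)) * (p - q)‖ := by
      rw [(Commute.all p q).geom_sum₂_mul]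
    _ ≤ ‖∑ i ∈ Finset.range n, p ^ i * q ^ (n - 1 - i)‖ * ‖p - q‖ := norm_mul_le _ _
    _ ≤ r ^ (n - 1) * n * ‖p - q‖ := by
      gcongr
      simpa [mul_comm] using norm_sum_le_of_le _ term_le

section Coordinates

variable (x w : EuclideanSpace ℂ (Fin 3))

lemma Qmap_apply_two : Qmap x 2 = x 2 := rfl

lemma apply_zero_eq_Qmap : x 0 = Qmap x 0 + I * Qmap x 1 := by
  simp only [Qmap, mk3, WithLp.equiv_symm_apply, Matrix.cons_val]
  linear_combination (x 0 - x 1) / 2 * I_sq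

lemma apply_one_eq_Qmap : x 1 = Qmap x 0 - I * Qmap x 1 := by
  simp only [Qmap, mk3, WithLp.equiv_symm_apply, Matrix.cons_val]
  linear_combination (x 1 - x 0) / 2 * I_sq

lemma apply_zero_mul_apply_one_eq_Qmap : x 0 * x 1 = Qmap x 0 ^ 2 + Qmap x 1 ^ 2 := by
  rw [apply_zero_eq_Qmap x, apply_one_eq_Qmap x]
  linear_combination -Qmap x 1 ^ 2 * I_sq

lemma norm_sq_eq_Qmap :
    ‖x‖ ^ 2 = 2 * ‖Qmap x 0‖ ^ 2 + 2 * ‖Qmap x 1‖ ^ 2 + ‖Qmap x 2‖ ^ 2 := by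
  have parallelogram := parallelogram_law_with_norm ℂ (Qmap x 0) (I * Qmap x 1)
  rw [← apply_zero_eq_Qmap, ← apply_one_eq_Qmap, norm_mul, norm_I, one_mul] at parallelogram
  rw [EuclideanSpace.norm_sq_eq, Fin.sum_univ_three, Qmap_apply_two]
  linear_combination parallelogram

lemma norm_Qmap_apply_zero_le : ‖Qmap x 0‖ ≤ ‖x‖ := by
  refine le_of_sq_le_sq ?_ (norm_nonneg x)
  rw [norm_sq_eq_Qmap]
  nlinarith [sq_nonneg ‖Qmap x 0‖, sq_nonneg ‖Qmap x 1‖, sq_nonneg ‖Qmap x 2‖]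

lemma Qmap_sub : Qmap (x - w) = Qmap x - Qmap w := by
  ext i
  fin_cases i <;>
    simp only [Qmap, mk3, PiLp.sub_apply, WithLp.equiv_symm_apply, Matrix.cons_val,
      Fin.zero_eta, Fin.mk_one, Fin.reduceFinMk] <;>
    ring

lemma Qmap_Pmap : Qmap (Pmap x) = mk3 (Qmap x 0) (-Qmap x 1) (-Qmap x 2) := by
  ext i
  fin_cases i <;>
    simp only [Qmap, Pmap, mk3, WithLp.equiv_symm_apply, Matrix.cons_val,
      Fin.zero_eta, Fin.mk_one, Fin.reduceFinMk] <;>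
    ring

lemma eta2_eq_Qmap : eta2 x = mk3 (Qmap x 0) (Qmap x 1 * Qmap x 2) (Qmap x 2 ^ 2) := by
  have middle : x 2 * (x 0 - x 1) / (2 * I) = Qmap x 1 * Qmap x 2 := by
    rw [apply_zero_eq_Qmap x, apply_one_eq_Qmap x, Qmap_apply_two]
    field_simp
    ring
  rw [eta2, middle]
  rfl

end Coordinates

section Bounds

variable {x w : EuclideanSpace ℂ (Fin 3)} {ρ K : ℝ}

lemma norm_Qmap_sub_le_norm_Qmap_sub_Pmap_iff :
    ‖Qmap (w - x)‖ ≤ ‖Qmap (w - Pmap x)‖ ↔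
      ‖Qmap x 1 - Qmap w 1‖ ^ 2 + ‖Qmap x 2 - Qmap w 2‖ ^ 2 ≤
        ‖Qmap x 1 + Qmap w 1‖ ^ 2 + ‖Qmap x 2 + Qmap w 2‖ ^ 2 := by
  rw [← sq_le_sq₀ (norm_nonneg _) (norm_nonneg _), Qmap_sub, Qmap_sub, Qmap_Pmap,
    EuclideanSpace.norm_sq_eq, EuclideanSpace.norm_sq_eq, Fin.sum_univ_three, Fin.sum_univ_three]
  simp [mk3, add_assoc, add_comm, norm_sub_rev]

lemma norm_Qmap_zero_sub_le : ‖Qmap x 0 - Qmap w 0‖ ≤ ‖eta2 x - eta2 w‖ := by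
  simpa [eta2_eq_Qmap, mk3] using PiLp.norm_apply_le (eta2 x - eta2 w) 0

lemma norm_Qmap_one_mul_two_sub_le :
    ‖Qmap x 1 * Qmap x 2 - Qmap w 1 * Qmap w 2‖ ≤ ‖eta2 x - eta2 w‖ := by
  simpa [eta2_eq_Qmap, mk3] using PiLp.norm_apply_le (eta2 x - eta2 w) 1

lemma norm_sq_two_sub_le : ‖x 2 ^ 2 - w 2 ^ 2‖ ≤ ‖eta2 x - eta2 w‖ := by
  simpa [eta2, mk3] using PiLp.norm_apply_le (eta2 x - eta2 w) 2

lemma norm_Qmap_one_sq_sub_le (hK : 0 ≤ K)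
    (hxw : ‖x 0 * x 1 - w 0 * w 1‖ ≤ K * ‖x 2 ^ 2 - w 2 ^ 2‖) (hxρ : ‖x‖ ≤ ρ) (hwρ : ‖w‖ ≤ ρ) :
    ‖Qmap x 1 ^ 2 - Qmap w 1 ^ 2‖ ≤ (K + 2 * ρ) * ‖eta2 x - eta2 w‖ := by
  have norm_add_le_two_mul : ‖Qmap x 0 + Qmap w 0‖ ≤ 2 * ρ := by
    rw [two_mul]
    exact norm_add_le_of_le ((norm_Qmap_apply_zero_le x).trans hxρ)
      ((norm_Qmap_apply_zero_le w).trans hwρ)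
  calc ‖Qmap x 1 ^ 2 - Qmap w 1 ^ 2‖
    _ = ‖(x 0 * x 1 - w 0 * w 1) - (Qmap x 0 + Qmap w 0) * (Qmap x 0 - Qmap w 0)‖ := by
      rw [apply_zero_mul_apply_one_eq_Qmap, apply_zero_mul_apply_one_eq_Qmap]
      ring_nf
    _ ≤ ‖x 0 * x 1 - w 0 * w 1‖ + ‖Qmap x 0 + Qmap w 0‖ * ‖Qmap x 0 - Qmap w 0‖ := by
      rw [← norm_mul]
      exact norm_sub_le _ _
    _ ≤ K * ‖eta2 x - eta2 w‖ + 2 * ρ * ‖eta2 x - eta2 w‖ := by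
      have hρ : 0 ≤ ρ := (norm_nonneg x).trans hxρ
      gcongr
      · exact hxw.trans (by gcongr; exact norm_sq_two_sub_le)
      · exact norm_Qmap_zero_sub_le
    _ = (K + 2 * ρ) * ‖eta2 x - eta2 w‖ := by ring

lemma norm_Qmap_zero_sub_sq_le (hxρ : ‖x‖ ≤ ρ) (hwρ : ‖w‖ ≤ ρ) :
    ‖Qmap x 0 - Qmap w 0‖ ^ 2 ≤ 2 * ρ * ‖eta2 x - eta2 w‖ := by
  have norm_sub_le_two_mul : ‖Qmap x 0 - Qmap w 0‖ ≤ 2 * ρ := by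
    rw [two_mul]
    exact norm_sub_le_of_le ((norm_Qmap_apply_zero_le x).trans hxρ)
      ((norm_Qmap_apply_zero_le w).trans hwρ)
  rw [sq]
  gcongr
  · exact (norm_nonneg _).trans norm_sub_le_two_mul
  · exact norm_Qmap_zero_sub_le

lemma norm_Qmap_one_sub_sq_add_norm_Qmap_two_sub_sq_le (hK : 0 ≤ K)
    (hxw : ‖x 0 * x 1 - w 0 * w 1‖ ≤ K * ‖x 2 ^ 2 - w 2 ^ 2‖) (hxρ : ‖x‖ ≤ ρ) (hwρ : ‖w‖ ≤ ρ)
    (hQ : ‖Qmap (w - x)‖ ≤ ‖Qmap (w - Pmap x)‖) :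
    ‖Qmap x 1 - Qmap w 1‖ ^ 2 + ‖Qmap x 2 - Qmap w 2‖ ^ 2 ≤
      (3 + 2 * ρ + K) * ‖eta2 x - eta2 w‖ := by
  have one_le : ‖(Qmap x 1 - Qmap w 1) * (Qmap x 1 + Qmap w 1)‖ ≤
      (K + 2 * ρ) * ‖eta2 x - eta2 w‖ := by
    rw [mul_comm, ← sq_sub_sq]
    exact norm_Qmap_one_sq_sub_le hK hxw hxρ hwρ
  have two_le : ‖(Qmap x 2 - Qmap w 2) * (Qmap x 2 + Qmap w 2)‖ ≤ ‖eta2 x - eta2 w‖ := by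
    rw [mul_comm, ← sq_sub_sq, Qmap_apply_two, Qmap_apply_two]
    exact norm_sq_two_sub_le
  have cross_le : ‖(Qmap x 1 - Qmap w 1) * (Qmap x 2 + Qmap w 2) +
      (Qmap x 2 - Qmap w 2) * (Qmap x 1 + Qmap w 1)‖ ≤ 2 * ‖eta2 x - eta2 w‖ := by
    have cross_eq : (Qmap x 1 - Qmap w 1) * (Qmap x 2 + Qmap w 2) +
        (Qmap x 2 - Qmap w 2) * (Qmap x 1 + Qmap w 1) =
        2 * (Qmap x 1 * Qmap x 2 - Qmap w 1 * Qmap w 2) := by ring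
    rw [cross_eq, norm_mul, norm_ofNat]
    gcongr
    exact norm_Qmap_one_mul_two_sub_le
  have := norm_sq_add_norm_sq_le (norm_Qmap_sub_le_norm_Qmap_sub_Pmap_iff.1 hQ)
  linarith

lemma norm_sub_sq_le_mul_norm_eta2_sub (hK : 0 ≤ K)
    (hxw : ‖x 0 * x 1 - w 0 * w 1‖ ≤ K * ‖x 2 ^ 2 - w 2 ^ 2‖) (hxρ : ‖x‖ ≤ ρ) (hwρ : ‖w‖ ≤ ρ)
    (hQ : ‖Qmap (w - x)‖ ≤ ‖Qmap (w - Pmap x)‖) :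
    ‖x - w‖ ^ 2 ≤ (6 + 8 * ρ + 2 * K) * ‖eta2 x - eta2 w‖ := by
  have zero_le := norm_Qmap_zero_sub_sq_le hxρ hwρ
  have one_two_le := norm_Qmap_one_sub_sq_add_norm_Qmap_two_sub_sq_le hK hxw hxρ hwρ hQ
  calc ‖x - w‖ ^ 2
    _ = 2 * ‖Qmap x 0 - Qmap w 0‖ ^ 2 + 2 * ‖Qmap x 1 - Qmap w 1‖ ^ 2 +
        ‖Qmap x 2 - Qmap w 2‖ ^ 2 := by rw [norm_sq_eq_Qmap, Qmap_sub]; rfl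
    _ ≤ 2 * ‖Qmap x 0 - Qmap w 0‖ ^ 2 +
        2 * (‖Qmap x 1 - Qmap w 1‖ ^ 2 + ‖Qmap x 2 - Qmap w 2‖ ^ 2) := by
      linarith [sq_nonneg ‖Qmap x 2 - Qmap w 2‖]
    _ ≤ (6 + 8 * ρ + 2 * K) * ‖eta2 x - eta2 w‖ := by linarith

lemma one_div_eighty_mul_min_le_inv (hρ : 0 < ρ) (hK : 0 < K) :
    1 / 80 * min (min 4 (5 / (3 * ρ))) (1 / K) ≤ (6 + 8 * ρ + 2 * K)⁻¹ := by
  set c := min (min 4 (5 / (3 * ρ))) (1 / K)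
  have hc : c ≤ 4 := (min_le_left _ _).trans (min_le_left _ _)
  have hcρ : c * (3 * ρ) ≤ 5 :=
    (le_div_iff₀ (by positivity)).1 ((min_le_left _ _).trans (min_le_right _ _))
  have hcK : c * K ≤ 1 := (le_div_iff₀ hK).1 (min_le_right _ _)
  rw [← one_div, le_div_iff₀ (by positivity)]
  linarith

/-- `K` may be any Lipschitz constant of `f` when `x` and `w` lie on the surface
`x₁x₂ = f (x₃²)`. -/
theorem stmt14_general (hρ : 0 < ρ) (hK : 0 < K)
    (hxw : ‖x 0 * x 1 - w 0 * w 1‖ ≤ K * ‖x 2 ^ 2 - w 2 ^ 2‖) (hxρ : ‖x‖ ≤ ρ) (hwρ : ‖w‖ ≤ ρ)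
    (hQ : ‖Qmap (w - Pmap x)‖ ≥ ‖Qmap (w - x)‖) :
    ‖eta2 x - eta2 w‖ ≥ 1 / 80 * min (min 4 (5 / (3 * ρ))) (1 / K) * ‖x - w‖ ^ 2 :=
  calc 1 / 80 * min (min 4 (5 / (3 * ρ))) (1 / K) * ‖x - w‖ ^ 2
    _ ≤ (6 + 8 * ρ + 2 * K)⁻¹ * ‖x - w‖ ^ 2 := by
      gcongr
      exact one_div_eighty_mul_min_le_inv hρ hK
    _ ≤ ‖eta2 x - eta2 w‖ :=
      inv_mul_le_of_le_mul₀ (by positivity) (norm_nonneg _)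
        (norm_sub_sq_le_mul_norm_eta2_sub hK.le hxw hxρ hwρ hQ)

lemma norm_apply_zero_mul_apply_one_sub_le {N : ℕ} (hx : x 0 * x 1 = x 2 ^ (2 * N))
    (hw : w 0 * w 1 = w 2 ^ (2 * N)) (hxρ : ‖x‖ ≤ ρ) (hwρ : ‖w‖ ≤ ρ) :
    ‖x 0 * x 1 - w 0 * w 1‖ ≤ ρ ^ (2 * N - 2) * N * ‖x 2 ^ 2 - w 2 ^ 2‖ := by
  have norm_sq_two_le {y : EuclideanSpace ℂ (Fin 3)} (hy : ‖y‖ ≤ ρ) : ‖y 2 ^ 2‖ ≤ ρ ^ 2 := by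
    rw [norm_pow]
    gcongr
    exact (PiLp.norm_apply_le y 2).trans hy
  have := norm_pow_sub_pow_le (norm_sq_two_le hxρ) (norm_sq_two_le hwρ) N
  rwa [← pow_mul, ← pow_mul, ← pow_mul, Nat.mul_sub_one, ← hx, ← hw] at this

end Bounds

/-- If `x, w ∈ X_{2N}` with `‖x‖ ≤ ρ`, `‖w‖ ≤ ρ` and `‖Q(w − Px)‖ ≥ ‖Q(w − x)‖`, then
`‖η₂(x) − η₂(w)‖ ≥ C₁₂(ρ)·‖x − w‖²`, where
`C₁₂(ρ) = (1/80)·min{4, 5/(3ρ), 1/(ρ^{2N−2}·N)}`. -/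
theorem stmt14 (N : ℕ) (hN : 2 ≤ N) (ρ : ℝ) (hρ : 0 < ρ)
    (x w : EuclideanSpace ℂ (Fin 3))
    (hx : x 0 * x 1 = x 2 ^ (2 * N)) (hw : w 0 * w 1 = w 2 ^ (2 * N))
    (hxρ : ‖x‖ ≤ ρ) (hwρ : ‖w‖ ≤ ρ)
    (hQ : ‖Qmap (w - Pmap x)‖ ≥ ‖Qmap (w - x)‖) :
    ‖eta2 x - eta2 w‖ ≥
      1 / 80 * min (min 4 (5 / (3 * ρ))) (1 / (ρ ^ (2 * N - 2) * N)) * ‖x - w‖ ^ 2 := by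
  exact stmt14_general hρ (by positivity)
    (norm_apply_zero_mul_apply_one_sub_le hx hw hxρ hwρ) hxρ hwρ hQ
end
end

section
/- Let N ≥ 2 be a natural number and ρ > 0. Let a, b, c, s, t, u be complex numbers all of absolute value at most ρ, satisfying a² + b² = c^{2N} and s² + t² = u^{2N}, and suppose that |b² − t²| ≥ 3·ρ^{2N−2}·N·|c² − u²|. Then |b² − t²| ≤ 3ρ·|a − s|; equivalently, (2/3)|b² − t²| ≤ |a² − s²|. -/
/-!
The equations give `b² - t² = (c^{2N} - u^{2N}) - (a² - s²)`. Since `z ↦ z^N` is Lipschitz with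
constant `N ρ^{2N-2}` on the ball of radius `ρ²`, which contains `c²` and `u²`, the lower bound on
`|b² - t²|` says that `c^{2N} - u^{2N}` accounts for at most a third of it. Hence `a² - s²` accounts
for the remaining two thirds, and `z ↦ z²` is Lipschitz with constant `2ρ` on the ball of radius
`ρ`.
-/

section NormedRing

variable {A : Type*} [SeminormedRing A] {x y : A} {r : ℝ}

theorem norm_pow_sub_pow_le_mul_norm_sub (hx : ‖x‖ ≤ r) (hy : ‖y‖ ≤ r) (n : ℕ) :
    ‖x ^ n - y ^ n‖ ≤ n * r ^ (n - 1) * ‖x - y‖ := by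
  have hr : 0 ≤ r := (norm_nonneg x).trans hx
  induction n with
  | zero => simp
  | succ k ih =>
    obtain rfl | hk := k.eq_zero_or_pos
    · simp
    have telescope : x ^ (k + 1) - y ^ (k + 1) = x * (x ^ k - y ^ k) + (x - y) * y ^ k := by
      rw [pow_succ' x, pow_succ' y]
      noncomm_ring
    have hyk : ‖y ^ k‖ ≤ r ^ k := (norm_pow_le' y hk).trans (by gcongr)
    calc ‖x ^ (k + 1) - y ^ (k + 1)‖
        ≤ ‖x * (x ^ k - y ^ k)‖ + ‖(x - y) * y ^ k‖ := telescope ▸ norm_add_le _ _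
      _ ≤ ‖x‖ * ‖x ^ k - y ^ k‖ + ‖x - y‖ * ‖y ^ k‖ :=
          add_le_add (norm_mul_le _ _) (norm_mul_le _ _)
      _ ≤ r * (k * r ^ (k - 1) * ‖x - y‖) + ‖x - y‖ * r ^ k := by gcongr
      _ = (k + 1 : ℕ) * r ^ (k + 1 - 1) * ‖x - y‖ := by
          rw [Nat.add_sub_cancel, ← mul_pow_sub_one hk.ne' r]
          push_cast
          ring

theorem norm_pow_mul_sub_pow_mul_le (hx : ‖x‖ ≤ r) (hy : ‖y‖ ≤ r) (m n : ℕ) :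
    ‖x ^ (m * n) - y ^ (m * n)‖ ≤ n * r ^ (m * n - m) * ‖x ^ m - y ^ m‖ := by
  obtain rfl | hm := m.eq_zero_or_pos
  · simp
  have norm_pow_le_pow {z : A} (hz : ‖z‖ ≤ r) : ‖z ^ m‖ ≤ r ^ m :=
    (norm_pow_le' z hm).trans (by gcongr)
  simpa only [← pow_mul, Nat.mul_sub_one] using
    norm_pow_sub_pow_le_mul_norm_sub (norm_pow_le_pow hx) (norm_pow_le_pow hy) n

end NormedRing

theorem stmt16_general {A : Type*} [SeminormedRing A] (N : ℕ) (ρ : ℝ) (a b c s t u : A)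
    (ha : ‖a‖ ≤ ρ) (hc : ‖c‖ ≤ ρ) (hs : ‖s‖ ≤ ρ) (hu : ‖u‖ ≤ ρ)
    (hx : a ^ 2 + b ^ 2 = c ^ (2 * N)) (hw : s ^ 2 + t ^ 2 = u ^ (2 * N))
    (hbig : ‖b ^ 2 - t ^ 2‖ ≥ 3 * ρ ^ (2 * N - 2) * N * ‖c ^ 2 - u ^ 2‖) :
    ‖b ^ 2 - t ^ 2‖ ≤ 3 * ρ * ‖a - s‖ ∧
    2 / 3 * ‖b ^ 2 - t ^ 2‖ ≤ ‖a ^ 2 - s ^ 2‖ := by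
  have hcu : ‖c ^ (2 * N) - u ^ (2 * N)‖ ≤ 1 / 3 * ‖b ^ 2 - t ^ 2‖ := by
    linarith [norm_pow_mul_sub_pow_mul_le hc hu 2 N]
  have hbt : ‖b ^ 2 - t ^ 2‖ ≤ ‖c ^ (2 * N) - u ^ (2 * N)‖ + ‖a ^ 2 - s ^ 2‖ := by
    have hsub : b ^ 2 - t ^ 2 = c ^ (2 * N) - u ^ (2 * N) - (a ^ 2 - s ^ 2) := by
      rw [← hx, ← hw]
      abel
    exact hsub ▸ norm_sub_le _ _
  have has : ‖a ^ 2 - s ^ 2‖ ≤ 2 * ρ * ‖a - s‖ := by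
    simpa using norm_pow_sub_pow_le_mul_norm_sub ha hs 2
  have h_two_thirds : 2 / 3 * ‖b ^ 2 - t ^ 2‖ ≤ ‖a ^ 2 - s ^ 2‖ := by linarith
  exact ⟨by linarith, h_two_thirds⟩

/-- Let `a, b, c, s, t, u` be complex numbers of absolute value at most `ρ`, with
`a² + b² = c^{2N}`, `s² + t² = u^{2N}` and `|b² − t²| ≥ 3ρ^{2N−2}N|c² − u²|`. Then
`|b² − t²| ≤ 3ρ|a − s|`; equivalently `(2/3)|b² − t²| ≤ |a² − s²|`. -/
theorem stmt16 (N : ℕ) (hN : 2 ≤ N) (ρ : ℝ) (hρ : 0 < ρ) (a b c s t u : ℂ)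
    (ha : ‖a‖ ≤ ρ) (hb : ‖b‖ ≤ ρ) (hc : ‖c‖ ≤ ρ)
    (hs : ‖s‖ ≤ ρ) (ht : ‖t‖ ≤ ρ) (hu : ‖u‖ ≤ ρ)
    (hx : a ^ 2 + b ^ 2 = c ^ (2 * N)) (hw : s ^ 2 + t ^ 2 = u ^ (2 * N))
    (hbig : ‖b ^ 2 - t ^ 2‖ ≥
      3 * ρ ^ (2 * N - 2) * N * ‖c ^ 2 - u ^ 2‖) :
    ‖b ^ 2 - t ^ 2‖ ≤ 3 * ρ * ‖a - s‖ ∧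
    2 / 3 * ‖b ^ 2 - t ^ 2‖ ≤ ‖a ^ 2 - s ^ 2‖ :=
  stmt16_general N ρ a b c s t u ha hc hs hu hx hw hbig
end
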